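/- If v is a lower semicontinuous viscosity supersolution of Δv = f on a ball with f continuous, v ≥ 0 on the outer collar, inf_{B_δ} v ≤ −δ³ < 0, then the contact set {v = Γ_v} ∩ B_δ, where Γ_v is the convex envelope, has positive Lebesgue measure. -/

import Mathlib

open MeasureTheory Metric Set Real Filter Topology

noncomputable section

/-- The convex envelope `Γ_v(z) = sup{ l(z) : l affine, l ≤ v on B_δ, l ≤ 0 on B_{2δ} \ B_δ }`. -/
def convEnv {m : ℕ} (δ : ℝ) (v : EuclideanSpace ℝ (Fin m) → ℝ)
    (z : EuclideanSpace ℝ (Fin m)) : ℝ :=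
  sSup {y : ℝ | ∃ l : EuclideanSpace ℝ (Fin m) →ᵃ[ℝ] ℝ,
    (∀ x ∈ ball (0 : EuclideanSpace ℝ (Fin m)) δ, l x ≤ v x) ∧
    (∀ x ∈ ball (0 : EuclideanSpace ℝ (Fin m)) (2 * δ) \
        ball (0 : EuclideanSpace ℝ (Fin m)) δ, l x ≤ 0) ∧
    y = l z}

/-- The Laplacian of a `C²` function `φ` at `x`, computed in the standard
orthonormal basis of `ℝᵐ`. -/
def lapR {m : ℕ} (φ : EuclideanSpace ℝ (Fin m) → ℝ)
    (x : EuclideanSpace ℝ (Fin m)) : ℝ :=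
  ∑ j : Fin m,
    iteratedFDeriv ℝ 2 φ x
      ![EuclideanSpace.single j (1:ℝ), EuclideanSpace.single j (1:ℝ)]

/-- `v` is a (lower semicontinuous) viscosity supersolution of `Δv = f` on the open set `s` :
every `C²` function touching `v` from below at a point of `s` has Laplacian at most `f` there. -/
def ViscSupersol {m : ℕ} (v f : EuclideanSpace ℝ (Fin m) → ℝ)
    (s : Set (EuclideanSpace ℝ (Fin m))) : Prop :=
  ∀ z₀ ∈ s, ∀ ψ : EuclideanSpace ℝ (Fin m) → ℝ, ∀ ρ > (0:ℝ),
    ball z₀ ρ ⊆ s → ContDiffOn ℝ 2 ψ (ball z₀ ρ) →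
    (∀ z ∈ ball z₀ ρ, ψ z ≤ v z) → ψ z₀ = v z₀ → lapR ψ z₀ ≤ f z₀

/-!
Every sufficiently small `p` is a subgradient of `v` at some contact point `g p`: slide a plane of
slope `p` up from below until it touches the graph of `v`; since `v` is negative somewhere in `B_δ`
and nonnegative on its boundary, the touching happens in a fixed compact subset of `B_δ`.

The equation enters through the fact that `g` is antilipschitz on nearby contact points. If `v` has
subgradients `p₀` and `p₁` at `z₀` and `z₁`, it lies above the maximum of two affine functions,
whose kink leaves room for a test function that has second derivative of order `‖p₁ - p₀‖ / R` in
the direction `p₁ - p₀` and touches `v` from below in `ball z₀ R`, as soon as `R` is a large enough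
multiple of `‖z₁ - z₀‖`. The upper bound of `f` then gives `‖p₁ - p₀‖ ≤ C R`.

Hence the range of `g`, which consists of contact points, has a Lipschitz image containing a ball.
-/

open scoped RealInnerProductSpace NNReal

section Antilipschitz

theorem exists_antilipschitzWith_of_dist_le {X Y : Type*} [PseudoMetricSpace X] [BoundedSpace X]
    [PseudoMetricSpace Y] {g : X → Y} {ρ C : ℝ} (hρ : 0 < ρ)
    (hg : ∀ x y, dist (g x) (g y) < ρ → dist x y ≤ C * dist (g x) (g y)) :
    ∃ K, AntilipschitzWith K g := by
  set D := diam (univ : Set X)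
  refine ⟨(max C (D / ρ)).toNNReal, AntilipschitzWith.of_le_mul_dist fun x y => ?_⟩
  have hK : (0 : ℝ) ≤ max C (D / ρ) := le_max_of_le_right (div_nonneg diam_nonneg hρ.le)
  rw [Real.coe_toNNReal _ hK]
  rcases lt_or_ge (dist (g x) (g y)) ρ with hnear | hfar
  · exact (hg x y hnear).trans (by gcongr; exact le_max_left _ _)
  · calc dist x y ≤ D := dist_le_diam_of_mem (Bornology.IsBounded.all _) (mem_univ x) (mem_univ y)
      _ = D / ρ * ρ := (div_mul_cancel₀ D hρ.ne').symm
      _ ≤ max C (D / ρ) * dist (g x) (g y) := by gcongr; exact le_max_right _ _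

theorem measure_range_pos_of_antilipschitzWith {E : Type*} [NormedAddCommGroup E]
    [NormedSpace ℝ E] [FiniteDimensional ℝ E] [MeasurableSpace E] [BorelSpace E]
    (μ : Measure E) [μ.IsAddHaarMeasure] {s : Set E} (hs : μ s ≠ 0) {g : s → E} {K : ℝ≥0}
    (hg : AntilipschitzWith K g) : 0 < μ (range g) := by
  refine pos_iff_ne_zero.2 fun hrange => hs ?_
  have hHausdorff : μH[Module.finrank ℝ E] (range g) = 0 :=
    Measure.absolutelyContinuous_isAddHaarMeasure _ μ hrange
  refine Measure.absolutelyContinuous_isAddHaarMeasure μ μH[Module.finrank ℝ E] ?_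
  have hle := hg.le_hausdorffMeasure_image (Nat.cast_nonneg (Module.finrank ℝ E)) univ
  rw [image_univ, hHausdorff, mul_zero, ← isometry_subtype_coe.hausdorffMeasure_image
    (.inl (Nat.cast_nonneg _)), image_univ, Subtype.range_coe] at hle
  exact le_bot_iff.1 hle

end Antilipschitz

section Semicontinuity

theorem exists_isLocalMin_mem_ball_of_lowerSemicontinuousOn {X : Type*} [PseudoMetricSpace X]
    [ProperSpace X] {w : X → ℝ} {a z : X} {r : ℝ} (hw : LowerSemicontinuousOn w (closedBall a r))
    (hz : z ∈ closedBall a r) (hlt : ∀ x ∈ sphere a r, w z < w x) :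
    ∃ y ∈ ball a r, IsLocalMin w y := by
  obtain ⟨y, hy, hmin⟩ := hw.exists_isMinOn ⟨z, hz⟩ (isCompact_closedBall a r)
  have hyball : y ∈ ball a r :=
    (mem_closedBall.1 hy).lt_of_ne fun hsphere =>
      (hlt y hsphere).not_ge (isMinOn_iff.1 hmin z hz)
  exact ⟨y, hyball, hmin.isLocalMin (mem_of_superset (isOpen_ball.mem_nhds hyball)
    ball_subset_closedBall)⟩

theorem closedBall_inter_preimage_Iic_subset_ball {X : Type*} [PseudoMetricSpace X] {w : X → ℝ}
    {a : X} {r c : ℝ} (hw : ∀ x ∈ sphere a r, 0 ≤ w x) (hc : c < 0) :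
    closedBall a r ∩ w ⁻¹' Iic c ⊆ ball a r :=
  fun x hx => (mem_closedBall.1 hx.1).lt_of_ne fun hsphere =>
    (hw x hsphere).not_gt ((mem_preimage.1 hx.2).trans_lt hc)

end Semicontinuity

section Subgradient

variable {E : Type*} [NormedAddCommGroup E] [InnerProductSpace ℝ E] {v : E → ℝ} {s t : Set E}

/-- `p` is a subgradient of `v` at `z` relative to `s`: the affine function of slope `p` through
`(z, v z)` lies below `v` on `s`. The point `z` itself is not required to belong to `s`. -/
def IsSubgradientOn (v : E → ℝ) (s : Set E) (z p : E) : Prop :=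
  ∀ x ∈ s, v z + ⟪p, x - z⟫ ≤ v x

theorem IsSubgradientOn.mono {z p : E} (h : IsSubgradientOn v t z p) (hst : s ⊆ t) :
    IsSubgradientOn v s z p :=
  fun x hx => h x (hst hx)

theorem exists_isSubgradientOn_of_isCompact (hs : IsCompact s) (hne : s.Nonempty)
    (hlsc : LowerSemicontinuousOn v s) (p : E) : ∃ z ∈ s, IsSubgradientOn v s z p := by
  have hcont : Continuous fun x => -⟪p, x⟫ := by fun_prop
  obtain ⟨z, hz, hmin⟩ :=
    (hlsc.add (hcont.lowerSemicontinuous.lowerSemicontinuousOn s)).exists_isMinOn hne hs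
  refine ⟨z, hz, fun x hx => ?_⟩
  have hzx := isMinOn_iff.1 hmin x hx
  rw [inner_sub_right]
  linarith

-- The mean of two affine functions plus half their distance is their maximum.
theorem IsSubgradientOn.midpoint_add_abs_le {z₀ z₁ p₀ p₁ x : E} (h₀ : IsSubgradientOn v s z₀ p₀)
    (h₁ : IsSubgradientOn v s z₁ p₁) (hz₁ : z₁ ∈ s) (hx : x ∈ s) :
    v z₀ + ⟪midpoint ℝ p₀ p₁, x - z₀⟫ + |⟪p₁ - p₀, x - z₀⟫| / 2 - ‖p₁ - p₀‖ * ‖z₁ - z₀‖ ≤ v x := by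
  have hmid : ⟪midpoint ℝ p₀ p₁, x - z₀⟫ = ⟪p₀, x - z₀⟫ + ⟪p₁ - p₀, x - z₀⟫ / 2 := by
    rw [midpoint_eq_smul_add, real_inner_smul_left, inner_add_left, inner_sub_left, invOf_eq_inv]
    ring
  have hsplit : ⟪p₁, x - z₁⟫ =
      ⟪p₀, x - z₀⟫ + ⟪p₁ - p₀, x - z₀⟫ - ⟪p₁ - p₀, z₁ - z₀⟫ - ⟪p₀, z₁ - z₀⟫ := by
    simp only [inner_sub_left, inner_sub_right]
    ring
  have hcs : ⟪p₁ - p₀, z₁ - z₀⟫ ≤ ‖p₁ - p₀‖ * ‖z₁ - z₀‖ := real_inner_le_norm _ _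
  have hnonneg : 0 ≤ ‖p₁ - p₀‖ * ‖z₁ - z₀‖ := by positivity
  rcases abs_cases ⟪p₁ - p₀, x - z₀⟫ with ⟨habs, -⟩ | ⟨habs, -⟩
  · linarith [h₀ z₁ hz₁, h₁ x hx]
  · linarith [h₀ x hx]

theorem inv_mul_inner_sq_le_abs_inner_div_two {d w : E} {R : ℝ} (hw : ‖w‖ ≤ R) :
    (2 * ‖d‖ * R)⁻¹ * ⟪d, w⟫ ^ 2 ≤ |⟪d, w⟫| / 2 := by
  have hR : 0 ≤ R := (norm_nonneg w).trans hw
  have hinner : |⟪d, w⟫| ≤ ‖d‖ * R := (abs_real_inner_le_norm d w).trans (by gcongr)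
  calc (2 * ‖d‖ * R)⁻¹ * ⟪d, w⟫ ^ 2 = (2 * ‖d‖ * R)⁻¹ * (|⟪d, w⟫| * |⟪d, w⟫|) := by
        rw [abs_mul_abs_self, sq]
    _ ≤ (2 * ‖d‖ * R)⁻¹ * (|⟪d, w⟫| * (‖d‖ * R)) := by gcongr
    _ = (‖d‖ * R) / (‖d‖ * R) * (|⟪d, w⟫| / 2) := by ring
    _ ≤ |⟪d, w⟫| / 2 := mul_le_of_le_one_left (by positivity) (div_self_le_one _)

-- On the sphere of radius `R` the quadratic term in `p₁ - p₀` is absorbed by the kink of the two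
-- supporting planes, while `- b * ‖x - z₀‖ ^ 2` pays for the distance between their contact points.
theorem exists_isLocalMin_sub_paraboloid [ProperSpace E] {z₀ z₁ p₀ p₁ : E} {R b : ℝ}
    (hlsc : LowerSemicontinuousOn v (closedBall z₀ R)) (hz₁ : z₁ ∈ closedBall z₀ R)
    (h₀ : IsSubgradientOn v (closedBall z₀ R) z₀ p₀)
    (h₁ : IsSubgradientOn v (closedBall z₀ R) z₁ p₁) (hb : ‖p₁ - p₀‖ * ‖z₁ - z₀‖ < b * R ^ 2) :
    ∃ y ∈ ball z₀ R, IsLocalMin (fun x => v x - (⟪midpoint ℝ p₀ p₁, x - z₀⟫ +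
      ((2 * ‖p₁ - p₀‖ * R)⁻¹ * ⟪p₁ - p₀, x - z₀⟫ ^ 2 - b * ‖x - z₀‖ ^ 2))) y := by
  refine exists_isLocalMin_mem_ball_of_lowerSemicontinuousOn ?_
    (mem_closedBall_self (dist_nonneg.trans (mem_closedBall.1 hz₁))) fun x hx => ?_
  · simp only [sub_eq_add_neg (v _)]
    refine hlsc.add (Continuous.lowerSemicontinuous ?_ |>.lowerSemicontinuousOn _)
    fun_prop
  · have hxR : ‖x - z₀‖ = R := by rw [← dist_eq_norm, mem_sphere.1 hx]
    have hsupport := h₀.midpoint_add_abs_le h₁ hz₁ (sphere_subset_closedBall hx)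
    have hquad := inv_mul_inner_sq_le_abs_inner_div_two (d := p₁ - p₀) hxR.le
    rw [hxR]
    simp only [sub_self, inner_zero_right, norm_zero]
    linarith

end Subgradient

section Laplacian

variable {m : ℕ}

theorem lapR_add_const (ψ : EuclideanSpace ℝ (Fin m) → ℝ) (c : ℝ) (x : EuclideanSpace ℝ (Fin m)) :
    lapR (fun y => ψ y + c) x = lapR ψ x := by
  have hfderiv : fderiv ℝ (fun y => ψ y + c) = fderiv ℝ ψ := funext fun _ => fderiv_add_const c
  simp only [lapR, iteratedFDeriv_two_apply, hfderiv]

theorem lapR_add_bilinear (ℓ : EuclideanSpace ℝ (Fin m) →L[ℝ] ℝ)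
    (B : EuclideanSpace ℝ (Fin m) →L[ℝ] EuclideanSpace ℝ (Fin m) →L[ℝ] ℝ)
    (z x : EuclideanSpace ℝ (Fin m)) :
    lapR (fun y => ℓ (y - z) + B (y - z) (y - z)) x =
      2 * ∑ j, B (EuclideanSpace.single j 1) (EuclideanSpace.single j 1) := by
  have hsub : ∀ y, HasFDerivAt (fun y : EuclideanSpace ℝ (Fin m) => y - z) (.id ℝ _) y :=
    fun y => (hasFDerivAt_id y).sub_const z
  have hfderiv : fderiv ℝ (fun y => ℓ (y - z) + B (y - z) (y - z)) =
      fun y => ℓ + (B + B.flip) (y - z) := by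
    funext y
    refine (((ℓ.hasFDerivAt.comp y (hsub y)).add
      ((B.hasFDerivAt.comp y (hsub y)).clm_apply (hsub y))).congr_fderiv ?_).fderiv
    ext w
    simp
  have hfderiv₂ : HasFDerivAt (fun y => ℓ + (B + B.flip) (y - z)) (B + B.flip) x :=
    (((B + B.flip).hasFDerivAt).comp x (hsub x)).const_add ℓ
  simp only [lapR, iteratedFDeriv_two_apply, hfderiv, hfderiv₂.fderiv, Finset.mul_sum]
  simp [two_mul]

theorem lapR_paraboloid (p d z x : EuclideanSpace ℝ (Fin m)) (a b : ℝ) :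
    lapR (fun y => ⟪p, y - z⟫ + (a * ⟪d, y - z⟫ ^ 2 - b * ‖y - z‖ ^ 2)) x =
      2 * (a * ‖d‖ ^ 2 - b * m) := by
  let I : EuclideanSpace ℝ (Fin m) →L[ℝ] EuclideanSpace ℝ (Fin m) →L[ℝ] ℝ := innerSL ℝ
  have hI : ∀ w w', I w w' = ⟪w, w'⟫ := fun _ _ => rfl
  let B := a • (I d).smulRight (I d) - b • I
  have hB : ∀ w, B w w = a * ⟪d, w⟫ ^ 2 - b * ‖w‖ ^ 2 := fun w => by
    simp [B, hI, sq]
  have htrace : ∑ j, B (EuclideanSpace.single j 1) (EuclideanSpace.single j 1) =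
      a * ‖d‖ ^ 2 - b * m := by
    simp [hB, EuclideanSpace.inner_single_right, EuclideanSpace.norm_sq_eq, Finset.mul_sum,
      mul_comm]
  rw [← htrace, ← lapR_add_bilinear (innerSL ℝ p) B z x]
  simp only [hB, innerSL_apply_apply]

theorem contDiff_paraboloid {E : Type*} [NormedAddCommGroup E] [InnerProductSpace ℝ E]
    (p d z : E) (a b : ℝ) {n : WithTop ℕ∞} :
    ContDiff ℝ n (fun y => ⟪p, y - z⟫ + (a * ⟪d, y - z⟫ ^ 2 - b * ‖y - z‖ ^ 2)) := by
  have hsub : ContDiff ℝ n fun y : E => y - z := contDiff_id.sub contDiff_const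
  have hinner : ∀ q : E, ContDiff ℝ n fun y => ⟪q, y - z⟫ := fun q => contDiff_const.inner ℝ hsub
  exact (hinner p).add ((contDiff_const.mul ((hinner d).pow 2)).sub
    (contDiff_const.mul (hsub.norm_sq ℝ)))

end Laplacian

namespace ViscSupersol

variable {m : ℕ} {v f : EuclideanSpace ℝ (Fin m) → ℝ} {s t : Set (EuclideanSpace ℝ (Fin m))}

theorem mono (hv : ViscSupersol v f t) (hst : s ⊆ t) : ViscSupersol v f s :=
  fun z hz ψ ρ hρ hball => hv z (hst hz) ψ ρ hρ (hball.trans hst)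

theorem lapR_le_of_isLocalMin_sub (hv : ViscSupersol v f s) (hs : IsOpen s)
    {ψ : EuclideanSpace ℝ (Fin m) → ℝ} (hψ : ContDiff ℝ 2 ψ) {y : EuclideanSpace ℝ (Fin m)}
    (hy : y ∈ s) (hmin : IsLocalMin (fun x => v x - ψ x) y) : lapR ψ y ≤ f y := by
  obtain ⟨ρ, hρ, hball⟩ := Metric.mem_nhds_iff.1 (inter_mem (hs.mem_nhds hy) hmin)
  rw [← lapR_add_const ψ (v y - ψ y)]
  refine hv y hy _ ρ hρ (hball.trans inter_subset_left) (hψ.add contDiff_const).contDiffOn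
    (fun x hx => ?_) (by ring)
  have hle : v y - ψ y ≤ v x - ψ x := (hball hx).2
  linarith

variable {z₀ z₁ p₀ p₁ : EuclideanSpace ℝ (Fin m)} {R F : ℝ}

theorem dist_subgradient_le_mul_radius (hv : ViscSupersol v f s) (hs : IsOpen s)
    (hball : closedBall z₀ R ⊆ s) (hlsc : LowerSemicontinuousOn v (closedBall z₀ R))
    (hF₀ : 0 ≤ F) (hF : ∀ x ∈ closedBall z₀ R, f x ≤ F)
    (h₀ : IsSubgradientOn v (closedBall z₀ R) z₀ p₀)
    (h₁ : IsSubgradientOn v (closedBall z₀ R) z₁ p₁) (hz : 4 * (m + 1) * dist z₁ z₀ < R) :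
    dist p₁ p₀ ≤ 2 * F * R := by
  rw [dist_eq_norm] at hz ⊢
  have hR : 0 < R := lt_of_le_of_lt (by positivity) hz
  set q := ‖p₁ - p₀‖
  rcases (norm_nonneg (p₁ - p₀)).eq_or_lt with hq | hq
  · exact hq.symm.le.trans (by positivity)
  have hz₁ : z₁ ∈ closedBall z₀ R := by
    rw [mem_closedBall, dist_eq_norm]
    nlinarith [norm_nonneg (z₁ - z₀), (Nat.cast_nonneg m : (0 : ℝ) ≤ m)]
  set b := q / (4 * (m + 1) * R) with hb
  have hbR : q * ‖z₁ - z₀‖ < b * R ^ 2 := by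
    rw [hb]
    calc q * ‖z₁ - z₀‖ < q * (R / (4 * (m + 1))) := by
          gcongr
          rwa [lt_div_iff₀' (by positivity)]
      _ = q / (4 * (m + 1) * R) * R ^ 2 := by field_simp
  obtain ⟨y, hy, hmin⟩ := exists_isLocalMin_sub_paraboloid hlsc hz₁ h₀ h₁ hbR
  have hlap := hv.lapR_le_of_isLocalMin_sub hs (contDiff_paraboloid _ _ _ _ _)
    (hball (ball_subset_closedBall hy)) hmin
  rw [lapR_paraboloid] at hlap
  have hbm : b * m ≤ q / (4 * R) := by
    rw [hb, div_mul_eq_mul_div, div_le_div_iff₀ (by positivity) (by positivity)]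
    nlinarith [mul_pos hq hR]
  calc q = 2 * (2 * ((2 * q * R)⁻¹ * q ^ 2 - q / (4 * R))) * R := by field_simp; ring
    _ ≤ 2 * (2 * ((2 * q * R)⁻¹ * q ^ 2 - b * m)) * R := by gcongr
    _ ≤ 2 * F * R := by gcongr; exact hlap.trans (hF y (ball_subset_closedBall hy))

theorem dist_subgradient_le_mul_dist (hv : ViscSupersol v f s) (hs : IsOpen s)
    (hball : closedBall z₀ R ⊆ s) (hlsc : LowerSemicontinuousOn v (closedBall z₀ R))
    (hF₀ : 0 < F) (hF : ∀ x ∈ closedBall z₀ R, f x ≤ F)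
    (h₀ : IsSubgradientOn v (closedBall z₀ R) z₀ p₀)
    (h₁ : IsSubgradientOn v (closedBall z₀ R) z₁ p₁) (hz : 4 * (m + 1) * dist z₁ z₀ < R) :
    dist p₁ p₀ ≤ 2 * F * (4 * (m + 1) * dist z₁ z₀) := by
  by_contra! hlt
  obtain ⟨r, hzr, hr⟩ := exists_between (lt_min hz ((lt_div_iff₀' (by positivity)).2 hlt))
  have hsub : closedBall z₀ r ⊆ closedBall z₀ R :=
    closedBall_subset_closedBall (hr.le.trans (min_le_left _ _))
  have hle := hv.dist_subgradient_le_mul_radius hs (hsub.trans hball) (hlsc.mono hsub) hF₀.le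
    (fun x hx => hF x (hsub hx)) (h₀.mono hsub) (h₁.mono hsub) hzr
  exact hle.not_gt ((lt_div_iff₀' (by positivity)).1 (hr.trans_le (min_le_right _ _)))

theorem exists_dist_subgradient_le {K : Set (EuclideanSpace ℝ (Fin m))}
    (hv : ViscSupersol v f s) (hs : IsOpen s) (hlsc : LowerSemicontinuousOn v s)
    (hf : ∀ K ⊆ s, IsCompact K → BddAbove (f '' K)) (hK : IsCompact K) (hKs : K ⊆ s) :
    ∃ ρ > 0, ∃ C, ∀ z₀ ∈ K, ∀ z₁ p₁ p₀, IsSubgradientOn v s z₁ p₁ →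
      IsSubgradientOn v s z₀ p₀ → dist z₁ z₀ < ρ → dist p₁ p₀ ≤ C * dist z₁ z₀ := by
  obtain ⟨R, hR, hRs⟩ := hK.exists_cthickening_subset_open hs hKs
  obtain ⟨F, hF⟩ := hf _ hRs hK.cthickening
  refine ⟨R / (4 * (m + 1)), by positivity, 2 * max F 1 * (4 * (m + 1)),
    fun z₀ hz₀ z₁ p₁ p₀ h₁ h₀ hz => ?_⟩
  have hball : closedBall z₀ R ⊆ cthickening R K := closedBall_subset_cthickening hz₀ R
  rw [mul_assoc (2 * max F 1)]
  exact hv.dist_subgradient_le_mul_dist hs (hball.trans hRs) (hlsc.mono (hball.trans hRs))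
    (by positivity) (fun x hx => (hF (mem_image_of_mem f (hball hx))).trans (le_max_left _ _))
    (h₀.mono (hball.trans hRs)) (h₁.mono (hball.trans hRs)) ((lt_div_iff₀' (by positivity)).1 hz)

end ViscSupersol

section Contact

variable {m : ℕ} {δ : ℝ} {v : EuclideanSpace ℝ (Fin m) → ℝ} {x₀ z p : EuclideanSpace ℝ (Fin m)}

theorem eq_convEnv_of_isSubgradientOn (hz : z ∈ ball 0 δ)
    (hsub : IsSubgradientOn v (ball 0 δ) z p)
    (hcollar : ∀ x ∈ ball 0 (2 * δ) \ ball 0 δ, v z + ⟪p, x - z⟫ ≤ 0) :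
    v z = convEnv δ v z := by
  let l : EuclideanSpace ℝ (Fin m) →ᵃ[ℝ] ℝ :=
    (innerSL ℝ p).toLinearMap.toAffineMap + AffineMap.const ℝ _ (v z - ⟪p, z⟫)
  have hl : ∀ x, l x = v z + ⟪p, x - z⟫ := fun x => by
    simp only [l, AffineMap.coe_add, LinearMap.coe_toAffineMap, AffineMap.coe_const, Pi.add_apply,
      Function.const_apply, ContinuousLinearMap.coe_coe, innerSL_apply_apply, inner_sub_right]
    ring
  refine (IsGreatest.csSup_eq ⟨?_, ?_⟩).symm
  · refine ⟨l, fun x hx => ?_, fun x hx => ?_, ?_⟩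
    · exact (hl x).trans_le (hsub x hx)
    · exact (hl x).trans_le (hcollar x hx)
    · simp [hl]
  · rintro _ ⟨l', hl', -, rfl⟩
    exact hl' z hz

theorem exists_isSubgradientOn_eq_convEnv
    (hlsc : LowerSemicontinuousOn v (closedBall 0 δ)) (hsphere : ∀ x ∈ sphere 0 δ, 0 ≤ v x)
    (hx₀ : x₀ ∈ ball 0 δ) (hneg : v x₀ < 0) (hp : ‖p‖ * (3 * δ) ≤ -v x₀) :
    ∃ z ∈ closedBall 0 δ ∩ v ⁻¹' Iic (v x₀ / 3),
      v z = convEnv δ v z ∧ IsSubgradientOn v (closedBall 0 δ) z p := by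
  have hx₀' := ball_subset_closedBall hx₀
  obtain ⟨z, hz, hsub⟩ := exists_isSubgradientOn_of_isCompact (isCompact_closedBall 0 δ)
    ⟨x₀, hx₀'⟩ hlsc p
  have hsupp : v z + ⟪p, x₀ - z⟫ ≤ v x₀ := hsub x₀ hx₀'
  have hp₀ : ∀ x, ‖x‖ ≤ 2 * δ → ⟪p, x - x₀⟫ ≤ -v x₀ := fun x hx => by
    have hdist : ‖x - x₀‖ ≤ 3 * δ := by
      linarith [norm_sub_le x x₀, mem_ball_zero_iff.1 hx₀]
    calc ⟪p, x - x₀⟫ ≤ ‖p‖ * ‖x - x₀‖ := real_inner_le_norm _ _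
      _ ≤ ‖p‖ * (3 * δ) := by gcongr
      _ ≤ -v x₀ := hp
  have hzv : v z ≤ v x₀ / 3 := by
    have hdist : ‖z - x₀‖ ≤ 2 * δ := by
      linarith [norm_sub_le z x₀, mem_ball_zero_iff.1 hx₀, mem_closedBall_zero_iff.1 hz]
    have hinner : ⟪p, z - x₀⟫ ≤ ‖p‖ * (2 * δ) :=
      (real_inner_le_norm _ _).trans (by gcongr)
    rw [← neg_sub z x₀, inner_neg_right] at hsupp
    linarith
  have hzball : z ∈ ball 0 δ :=
    closedBall_inter_preimage_Iic_subset_ball hsphere (by linarith) ⟨hz, hzv⟩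
  refine ⟨z, ⟨hz, hzv⟩, eq_convEnv_of_isSubgradientOn hzball (hsub.mono ball_subset_closedBall)
    fun x hx => ?_, hsub⟩
  have hsplit : ⟪p, x - z⟫ = ⟪p, x₀ - z⟫ + ⟪p, x - x₀⟫ := by
    rw [← inner_add_right]
    congr 1
    abel
  linarith [hp₀ x (mem_ball_zero_iff.1 hx.1).le]

end Contact

theorem contact_set_pos_measure_general {m : ℕ} {δ : ℝ} {v f : EuclideanSpace ℝ (Fin m) → ℝ}
    (hlsc : LowerSemicontinuousOn v (closedBall 0 δ)) (hsphere : ∀ z ∈ sphere 0 δ, 0 ≤ v z)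
    (hf : ∀ K ⊆ ball 0 δ, IsCompact K → BddAbove (f '' K))
    (hsup : ViscSupersol v f (ball 0 δ)) (hneg : ∃ x ∈ ball 0 δ, v x < 0) :
    0 < volume (ball 0 δ ∩ {z | v z = convEnv δ v z}) := by
  obtain ⟨x₀, hx₀, hvx₀⟩ := hneg
  have hδ : 0 < δ := pos_of_mem_ball hx₀
  set K := closedBall 0 δ ∩ v ⁻¹' Iic (v x₀ / 3)
  have hK : IsCompact K := hlsc.isCompact_inter_preimage_Iic (isCompact_closedBall 0 δ) _
  have hKball : K ⊆ ball 0 δ := closedBall_inter_preimage_Iic_subset_ball hsphere (by linarith)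
  obtain ⟨ρ, hρ, C, hC⟩ := hsup.exists_dist_subgradient_le isOpen_ball
    (hlsc.mono ball_subset_closedBall) hf hK hKball
  set η := -v x₀ / (3 * δ)
  have hη : 0 < η := div_pos (neg_pos.2 hvx₀) (by positivity)
  have hcontact : ∀ p : ball (0 : EuclideanSpace ℝ (Fin m)) η,
      ∃ z ∈ K, v z = convEnv δ v z ∧ IsSubgradientOn v (closedBall 0 δ) z p := fun p =>
    exists_isSubgradientOn_eq_convEnv hlsc hsphere hx₀ hvx₀
      ((le_div_iff₀ (by positivity)).1 (mem_ball_zero_iff.1 p.2).le)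
  choose g hgK hgΓ hgsub using hcontact
  have : BoundedSpace (ball (0 : EuclideanSpace ℝ (Fin m)) η) := isBounded_ball.boundedSpace_val
  obtain ⟨L, hL⟩ := exists_antilipschitzWith_of_dist_le hρ fun p q =>
    hC _ (hgK q) _ _ _ ((hgsub p).mono ball_subset_closedBall)
      ((hgsub q).mono ball_subset_closedBall)
  have hrange := measure_range_pos_of_antilipschitzWith volume
    (measure_ball_pos volume 0 hη).ne' hL
  refine hrange.trans_le (measure_mono ?_)
  rintro _ ⟨p, rfl⟩
  exact ⟨hKball (hgK p), hgΓ p⟩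

/-- If `v` is a lower semicontinuous viscosity supersolution of `Δv = f` with `f`
continuous, `v ≥ 0` on the outer collar and `inf_{B_δ} v ≤ −δ³ < 0`, then the contact set
`{v = Γ_v} ∩ B_δ` with the convex envelope `Γ_v` has positive Lebesgue measure. -/
theorem contact_set_pos_measure (m : ℕ) (hm : 0 < m) (δ : ℝ) (hδ : 0 < δ)
    (v f : EuclideanSpace ℝ (Fin m) → ℝ)
    (hlsc : LowerSemicontinuousOn v (closedBall (0 : EuclideanSpace ℝ (Fin m)) (2 * δ)))
    (hbdd : BddBelow (v '' ball (0 : EuclideanSpace ℝ (Fin m)) δ))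
    (hcollar : ∀ z ∈ ball (0 : EuclideanSpace ℝ (Fin m)) (2 * δ) \
        ball (0 : EuclideanSpace ℝ (Fin m)) δ, 0 ≤ v z)
    (hf : ContinuousOn f (ball (0 : EuclideanSpace ℝ (Fin m)) (2 * δ)))
    (hsup : ViscSupersol v f (ball (0 : EuclideanSpace ℝ (Fin m)) (2 * δ)))
    (hinf : sInf (v '' ball (0 : EuclideanSpace ℝ (Fin m)) δ) ≤ -δ ^ 3) :
    0 < volume (ball (0 : EuclideanSpace ℝ (Fin m)) δ ∩
      {z | v z = convEnv δ v z}) := by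
  have hsub : closedBall (0 : EuclideanSpace ℝ (Fin m)) δ ⊆ ball 0 (2 * δ) :=
    closedBall_subset_ball (by linarith)
  have hsphere : ∀ z ∈ sphere (0 : EuclideanSpace ℝ (Fin m)) δ, 0 ≤ v z := fun z hz =>
    hcollar z ⟨hsub (sphere_subset_closedBall hz), (mem_sphere.1 hz).not_lt⟩
  have hneg : ∃ x ∈ ball 0 δ, v x < 0 := by
    simpa only [exists_mem_image] using exists_lt_of_csInf_lt ((nonempty_ball.2 hδ).image v)
      (hinf.trans_lt (neg_neg_of_pos (pow_pos hδ 3)))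
  exact contact_set_pos_measure_general (hlsc.mono (hsub.trans ball_subset_closedBall)) hsphere
    (fun K hK hKc =>
      hKc.bddAbove_image (hf.mono (hK.trans (ball_subset_closedBall.trans hsub))))
    (hsup.mono (ball_subset_closedBall.trans hsub)) hneg
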